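/- arXiv:1812.06886 — 2 statements merged into one kernel-verified Lean document; each statement's English description precedes it below -/
import Mathlib

section
/- There exists a (63,8)-separable permutation code of length 63 and minimum distance 62; that is, there is a subset C of the symmetric group on Fin 63 of cardinality 8·63 = 504 which is the disjoint union of 8 sets L₁,…,L₈, each of cardinality 63, such that any two distinct permutations in the same L_i are at Hamming distance 63, and any two permutations in different blocks L_i, L_j are at Hamming distance 62. -/
/-- Hamming distance between two permutations of `Fin n`:
the number of points where they differ. -/
def permHammingDist {n : ℕ} (σ τ : Equiv.Perm (Fin n)) : ℕ :=
  (Finset.univ.filter fun x => σ x ≠ τ x).card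

/-- The rows of a difference matrix with nine rows over `(Z/3)^2 x Z/7`
(row zero is identically zero); the element `(u, v, z)` is coded as `u + 3 v + 9 z`. -/
def dmTable : List (List ℕ) := [
  [0, 0, 0, 0, 0, 0, 0, 0, 0, 0, 0, 0, 0, 0, 0, 0, 0, 0, 0, 0, 0, 0, 0, 0, 0, 0, 0, 0, 0, 0, 0, 0, 0, 0, 0, 0, 0, 0, 0, 0, 0, 0, 0, 0, 0, 0, 0, 0, 0, 0, 0, 0, 0, 0, 0, 0, 0, 0, 0, 0, 0, 0, 0],
  [0, 1, 2, 3, 4, 5, 6, 7, 8, 9, 10, 11, 12, 13, 14, 15, 16, 17, 18, 19, 20, 21, 22, 23, 24, 25, 26, 27, 28, 29, 30, 31, 32, 33, 34, 35, 36, 37, 38, 39, 40, 41, 42, 43, 44, 45, 46, 47, 48, 49, 50, 51, 52, 53, 54, 55, 56, 57, 58, 59, 60, 61, 62],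
  [45, 47, 46, 62, 61, 60, 31, 30, 32, 27, 29, 28, 54, 56, 55, 11, 10, 9, 49, 48, 50, 21, 23, 22, 58, 57, 59, 37, 36, 38, 19, 18, 20, 7, 6, 8, 43, 42, 44, 53, 52, 51, 35, 34, 33, 3, 5, 4, 24, 26, 25, 15, 17, 16, 41, 40, 39, 2, 1, 0, 14, 13, 12],
  [11, 14, 17, 42, 36, 39, 22, 25, 19, 33, 27, 30, 0, 3, 6, 38, 41, 44, 5, 8, 2, 13, 16, 10, 56, 59, 62, 58, 61, 55, 37, 40, 43, 31, 34, 28, 24, 18, 21, 49, 52, 46, 7, 1, 4, 47, 50, 53, 29, 32, 35, 26, 20, 23, 12, 15, 9, 60, 54, 57, 51, 45, 48],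
  [7, 2, 3, 6, 1, 5, 8, 0, 4, 19, 23, 24, 54, 58, 62, 59, 60, 55, 46, 50, 51, 48, 52, 47, 38, 39, 43, 10, 14, 15, 41, 42, 37, 49, 53, 45, 31, 35, 27, 9, 13, 17, 29, 30, 34, 57, 61, 56, 36, 40, 44, 22, 26, 18, 12, 16, 11, 32, 33, 28, 20, 21, 25],
  [31, 33, 29, 53, 46, 48, 54, 59, 61, 32, 34, 27, 17, 10, 12, 25, 18, 23, 22, 24, 20, 39, 44, 37, 55, 57, 62, 9, 14, 16, 4, 6, 2, 56, 58, 60, 11, 13, 15, 51, 47, 49, 36, 41, 43, 30, 35, 28, 40, 42, 38, 8, 1, 3, 0, 5, 7, 52, 45, 50, 26, 19, 21],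
  [9, 15, 12, 41, 38, 44, 25, 22, 19, 1, 7, 4, 57, 54, 60, 18, 24, 21, 46, 52, 49, 43, 40, 37, 8, 5, 2, 30, 27, 33, 51, 48, 45, 16, 13, 10, 14, 11, 17, 3, 0, 6, 35, 32, 29, 36, 42, 39, 53, 50, 47, 56, 62, 59, 31, 28, 34, 23, 20, 26, 55, 61, 58],
  [31, 29, 33, 50, 45, 52, 57, 55, 62, 58, 56, 60, 35, 30, 28, 11, 15, 13, 61, 59, 54, 19, 26, 21, 48, 46, 53, 3, 1, 8, 40, 38, 42, 9, 16, 14, 36, 43, 41, 32, 27, 34, 51, 49, 47, 37, 44, 39, 4, 2, 6, 23, 18, 25, 12, 10, 17, 20, 24, 22, 5, 0, 7],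
  [60, 59, 55, 30, 29, 34, 45, 53, 49, 14, 10, 15, 32, 28, 33, 44, 40, 36, 62, 58, 54, 11, 16, 12, 26, 22, 18, 13, 9, 17, 51, 50, 46, 3, 2, 7, 23, 19, 24, 38, 43, 39, 47, 52, 48, 0, 8, 4, 37, 42, 41, 57, 56, 61, 27, 35, 31, 6, 5, 1, 25, 21, 20]]

/-- The group of order 63. -/
abbrev DMGroup : Type := ZMod 3 × ZMod 3 × ZMod 7

/-- Decoding a natural number. -/
def dmDec (n : ℕ) : DMGroup := ((n : ZMod 3), ((n / 3 : ℕ) : ZMod 3), ((n / 9 : ℕ) : ZMod 7))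

/-- Entry of the table. -/
def dmEntry (i x : ℕ) : ℕ := (dmTable.getD i []).getD x 0

/-- Code of the difference of two coded elements. -/
def dmDiff (a b : ℕ) : ℕ :=
  (a + 2 * b) % 3 + 3 * ((a / 3 + 2 * (b / 3)) % 3) + 9 * ((a / 9 + 6 * (b / 9)) % 7)

theorem dmDiff_congr {a b c d : ℕ} (h : dmDec a - dmDec b = dmDec c - dmDec d) :
    dmDiff a b = dmDiff c d := by
  simp only [dmDec, Prod.mk_sub_mk, Prod.mk.injEq] at h
  obtain ⟨h1, h2, h3⟩ := h
  have e3 : ∀ p q r s : ℕ, (p : ZMod 3) - q = r - s → (p + 2 * q) % 3 = (r + 2 * s) % 3 := by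
    intro p q r s hh
    have h0 : (3 : ZMod 3) = 0 := by decide
    refine (ZMod.natCast_eq_natCast_iff _ _ 3).1 ?_
    push_cast
    linear_combination hh + (q - s) * h0
  have e7 : ∀ p q r s : ℕ, (p : ZMod 7) - q = r - s → (p + 6 * q) % 7 = (r + 6 * s) % 7 := by
    intro p q r s hh
    have h0 : (7 : ZMod 7) = 0 := by decide
    refine (ZMod.natCast_eq_natCast_iff _ _ 7).1 ?_
    push_cast
    linear_combination hh + (q - s) * h0
  simp only [dmDiff]
  rw [e3 _ _ _ _ h1, e3 _ _ _ _ h2, e7 _ _ _ _ h3]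

theorem dmTable_check : ∀ i < 9, ∀ j < i,
    ((List.range 63).map fun x => dmDiff (dmEntry i x) (dmEntry j x)).Nodup := by
  decide +kernel

theorem dmTable_zero : ∀ x < 63, dmEntry 0 x = 0 := by
  decide +kernel

theorem dm_inj (i j : ℕ) (hi : i < 9) (hj : j < i) :
    Function.Injective fun x : Fin 63 => dmDec (dmEntry i x) - dmDec (dmEntry j x) := by
  intro x y hxy
  have h := List.inj_on_of_nodup_map (dmTable_check i hi j hj)
    (List.mem_range.2 x.2) (List.mem_range.2 y.2) (dmDiff_congr hxy)
  exact Fin.ext h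

/-- The abstract construction. -/
theorem separable_of_dm {G : Type} [AddCommGroup G] [Fintype G] [DecidableEq G]
    (hG : Fintype.card G = 63) (s : Fin 8 → Fin 63 → G)
    (hs : ∀ i, Function.Injective (s i))
    (hd : ∀ i j, i ≠ j → Function.Injective fun x => s i x - s j x) :
    ∃ L : Fin 8 → Finset (Equiv.Perm (Fin 63)),
      (∀ i, (L i).card = 63) ∧
      (∀ i j, i ≠ j → Disjoint (L i) (L j)) ∧
      (Finset.univ.biUnion L).card = 504 ∧
      (∀ i, ∀ σ ∈ L i, ∀ τ ∈ L i, σ ≠ τ → permHammingDist σ τ = 63) ∧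
      (∀ i j, i ≠ j → ∀ σ ∈ L i, ∀ τ ∈ L j, permHammingDist σ τ = 62) := by
  classical
  have e : G ≃ Fin 63 := Fintype.equivFinOfCardEq hG
  have hbij : ∀ i g, Function.Bijective fun x => e (s i x + g) := fun i g =>
    Finite.injective_iff_bijective.1 fun x y h => hs i (add_right_cancel (e.injective h))
  let p : Fin 8 → G → Equiv.Perm (Fin 63) := fun i g => Equiv.ofBijective _ (hbij i g)
  have hp : ∀ i g x, p i g x = e (s i x + g) := fun i g x => rfl
  have hpinj : ∀ i, Function.Injective (p i) := by
    intro i g h hgh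
    have := congrArg (fun q : Equiv.Perm (Fin 63) => q 0) hgh
    simp only [hp] at this
    exact add_left_cancel (e.injective this)
  have hdist : ∀ i j, i ≠ j → ∀ g h, permHammingDist (p i g) (p j h) = 62 := by
    intro i j hij g h
    have hb : Function.Bijective fun x => s i x - s j x :=
      (Fintype.bijective_iff_injective_and_card _).2 ⟨hd i j hij, by simp [hG]⟩
    obtain ⟨x0, hx0⟩ := hb.2 (h - g)
    have hx0' : s i x0 - s j x0 = h - g := hx0
    have key : (Finset.univ.filter fun x => p i g x ≠ p j h x) = Finset.univ.erase x0 := by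
      ext x
      simp only [Finset.mem_filter, Finset.mem_univ, true_and, Finset.mem_erase, and_true, hp]
      rw [not_iff_not]
      constructor
      · intro hx
        have hx := e.injective hx
        apply hb.1
        show s i x - s j x = s i x0 - s j x0
        rw [hx0', sub_eq_sub_iff_add_eq_add, hx, add_comm]
      · rintro rfl
        congr 1
        rw [sub_eq_sub_iff_add_eq_add] at hx0'
        rw [hx0', add_comm]
    unfold permHammingDist
    rw [key]
    simp
  have hcard : ∀ i, (Finset.univ.image (p i)).card = 63 := fun i => by
    rw [Finset.card_image_of_injective _ (hpinj i), Finset.card_univ, hG]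
  have hdisj : ∀ i j, i ≠ j → Disjoint (Finset.univ.image (p i)) (Finset.univ.image (p j)) := by
    intro i j hij
    rw [Finset.disjoint_left]
    intro q hq hq'
    simp only [Finset.mem_image, Finset.mem_univ, true_and] at hq hq'
    obtain ⟨g, rfl⟩ := hq
    obtain ⟨h, hh⟩ := hq'
    have := hdist i j hij g h
    rw [hh] at this
    simp [permHammingDist] at this
  refine ⟨fun i => Finset.univ.image (p i), hcard, hdisj, ?_, ?_, ?_⟩
  · rw [Finset.card_biUnion fun i _ j _ hij => hdisj i j hij]
    simp [hcard]
  · intro i σ hσ τ hτ hne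
    simp only [Finset.mem_image, Finset.mem_univ, true_and] at hσ hτ
    obtain ⟨g, rfl⟩ := hσ
    obtain ⟨h, rfl⟩ := hτ
    have hgh : g ≠ h := fun hh => hne (by rw [hh])
    have key : (Finset.univ.filter fun x => p i g x ≠ p i h x) = Finset.univ := by
      ext x
      simp only [Finset.mem_filter, Finset.mem_univ, true_and, iff_true, hp]
      intro hx
      exact hgh (add_left_cancel (e.injective hx))
    unfold permHammingDist
    rw [key]
    simp
  · intro i j hij σ hσ τ hτ
    simp only [Finset.mem_image, Finset.mem_univ, true_and] at hσ hτ
    obtain ⟨g, rfl⟩ := hσ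
    obtain ⟨h, rfl⟩ := hτ
    exact hdist i j hij g h

/-- There exists a (63,8)-separable permutation code of length 63 and minimum
distance 62: a disjoint union of 8 blocks of 63 permutations each (so 504
codewords in total), with Hamming distance 63 between distinct permutations in
the same block and Hamming distance 62 between permutations in different blocks. -/
theorem separable_PA_63_8 :
    ∃ L : Fin 8 → Finset (Equiv.Perm (Fin 63)),
      (∀ i, (L i).card = 63) ∧
      (∀ i j, i ≠ j → Disjoint (L i) (L j)) ∧
      (Finset.univ.biUnion L).card = 504 ∧
      (∀ i, ∀ σ ∈ L i, ∀ τ ∈ L i, σ ≠ τ → permHammingDist σ τ = 63) ∧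
      (∀ i j, i ≠ j → ∀ σ ∈ L i, ∀ τ ∈ L j, permHammingDist σ τ = 62) := by
  refine separable_of_dm (G := DMGroup) (by simp [ZMod.card])
    (fun i x => dmDec (dmEntry (i.val + 1) x.val)) ?_ ?_
  · intro i x y hxy
    have h := dm_inj (i.val + 1) 0 (by omega) (by omega)
    apply h
    have hz : ∀ w : Fin 63, dmEntry 0 w.val = 0 := fun w => dmTable_zero _ w.2
    simp only [hz]
    exact congrArg (· - dmDec 0) hxy
  · intro i j hij
    rcases lt_or_gt_of_ne hij with h | h
    · intro x y hxy
      apply dm_inj (j.val + 1) (i.val + 1) (by omega) (by have : i.val < j.val := h; omega)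
      have := congrArg Neg.neg hxy
      simpa only [neg_sub] using this
    · exact dm_inj (i.val + 1) (j.val + 1) (by omega) (by have : j.val < i.val := h; omega)
end

section
/- There exists a (56,7)-separable permutation code of length 56 and minimum distance 55; that is, there is a subset C of the symmetric group on Fin 56 of cardinality 7·56 = 392 which is the disjoint union of 7 sets of 56 permutations each, with Hamming distance 56 between distinct permutations in the same block and Hamming distance 55 between permutations in different blocks. In particular there exist 7 mutually orthogonal Latin squares of order 56. -/
/-- A Latin square of order `n`: every row map and every column map is a bijection. -/
def IsLatinSquare {n : ℕ} (L : Fin n → Fin n → Fin n) : Prop :=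
  (∀ i, Function.Bijective fun j => L i j) ∧ (∀ j, Function.Bijective fun i => L i j)

/-- Two squares are orthogonal if the superposition map is injective. -/
def IsOrthogonal {n : ℕ} (L₁ L₂ : Fin n → Fin n → Fin n) : Prop :=
  Function.Injective fun p : Fin n × Fin n => (L₁ p.1 p.2, L₂ p.1 p.2)

/-- The elementary abelian group of order `8` times the cyclic group of order `7`. -/
abbrev GG : Type := (ZMod 2 × ZMod 2 × ZMod 2) × ZMod 7

/-- Powers of a primitive element `w` of the field with `8` elements (`w ^ 3 = w + 1`). -/
def wpow (n : ℕ) : ZMod 2 × ZMod 2 × ZMod 2 :=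
  match n % 7 with
  | 0 => (1, 0, 0)
  | 1 => (0, 1, 0)
  | 2 => (0, 0, 1)
  | 3 => (1, 1, 0)
  | 4 => (0, 1, 1)
  | 5 => (1, 1, 1)
  | _ => (1, 0, 1)

/-- The sign attached to a column class: `+1` for `1, 2, 4, ∞ = 7`, and `-1 = 6` otherwise. -/
def sgn (j : ℕ) : ℕ :=
  match j with
  | 1 => 1
  | 2 => 1
  | 4 => 1
  | 7 => 1
  | _ => 6

/-- The first seven rows of the `(56, 8, 1)` difference matrix, minus the eighth row. -/
def dm (i : Fin 7) (x : Fin 56) : GG :=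
  let j := x.val % 8
  let c := x.val / 8
  ((if j = 7 then 0 else wpow (i.val + j)) - wpow (3 * sgn j * c),
    ((sgn j * i.val * i.val + c * i.val + 2 * sgn j * c * c : ℕ) : ZMod 7))

/-- A numerical code of a group element. -/
def code (g : GG) : ℕ :=
  g.1.1.val + 2 * g.1.2.1.val + 4 * g.1.2.2.val + 8 * g.2.val

theorem dm_inj_aux : ∀ i : Fin 7,
    ((List.finRange 56).map fun x => code (dm i x)).Nodup := by
  decide +kernel

theorem dm_diff_aux : ∀ i k : Fin 7, i < k →
    ((List.finRange 56).map fun x => code (dm i x - dm k x)).Nodup := by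
  decide +kernel

theorem inj_of_nodup {f : Fin 56 → GG}
    (h : ((List.finRange 56).map fun x => code (f x)).Nodup) : Function.Injective f := by
  intro x y hxy
  exact List.inj_on_of_nodup_map h (List.mem_finRange x) (List.mem_finRange y)
    (congrArg code hxy)

theorem card_GG : Fintype.card GG = Fintype.card (Fin 56) := by
  simp [GG, ZMod.card]

theorem dm_bij (i : Fin 7) : Function.Bijective (dm i) :=
  (Fintype.bijective_iff_injective_and_card _).2 ⟨inj_of_nodup (dm_inj_aux i), card_GG.symm⟩

theorem dm_diff_bij {i k : Fin 7} (h : i ≠ k) :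
    Function.Bijective fun x => dm i x - dm k x := by
  refine (Fintype.bijective_iff_injective_and_card _).2 ⟨?_, card_GG.symm⟩
  rcases lt_or_gt_of_ne h with h | h
  · exact inj_of_nodup (dm_diff_aux i k h)
  · intro x y hxy
    apply inj_of_nodup (dm_diff_aux k i h)
    have := congrArg Neg.neg hxy
    simpa only [neg_sub] using this

/-- A numbering of the group. -/
noncomputable def ee : GG ≃ Fin 56 := Fintype.equivOfCardEq card_GG

/-- The translate by `g` of the `i`-th row, as a permutation. -/
noncomputable def pp (i : Fin 7) (g : GG) : Equiv.Perm (Fin 56) :=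
  (Equiv.ofBijective _ (dm_bij i)).trans ((Equiv.addRight g).trans ee)

theorem pp_apply (i : Fin 7) (g : GG) (x : Fin 56) : pp i g x = ee (dm i x + g) := rfl

theorem pp_inj (i : Fin 7) : Function.Injective (pp i) := by
  intro g h hgh
  have := congrArg (fun σ : Equiv.Perm (Fin 56) => σ 0) hgh
  simpa [pp_apply] using this

theorem dist_same (i : Fin 7) {g h : GG} (hgh : g ≠ h) :
    permHammingDist (pp i g) (pp i h) = 56 := by
  unfold permHammingDist
  rw [Finset.filter_true_of_mem]
  · simp
  · intro x _
    simpa [pp_apply] using hgh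

theorem dist_diff {i k : Fin 7} (hik : i ≠ k) (g h : GG) :
    permHammingDist (pp i g) (pp k h) = 55 := by
  unfold permHammingDist
  obtain ⟨x₀, hx₀, hu⟩ := (dm_diff_bij hik).existsUnique (h - g)
  have : (Finset.univ.filter fun x => pp i g x ≠ pp k h x) = Finset.univ.erase x₀ := by
    ext x
    simp only [Finset.mem_filter, Finset.mem_univ, true_and, Finset.mem_erase, and_true,
      ne_eq, pp_apply, EmbeddingLike.apply_eq_iff_eq]
    refine not_congr ⟨fun hx => hu x ?_, ?_⟩
    · simp only
      rw [sub_eq_sub_iff_add_eq_add, hx, add_comm]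
    · rintro rfl
      have := sub_eq_sub_iff_add_eq_add.1 hx₀
      rw [this, add_comm]
  rw [this, Finset.card_erase_of_mem (Finset.mem_univ _)]
  simp

/-- The blocks of the permutation code. -/
noncomputable def blk (i : Fin 7) : Finset (Equiv.Perm (Fin 56)) :=
  Finset.univ.map ⟨pp i, pp_inj i⟩

theorem mem_blk {i : Fin 7} {σ : Equiv.Perm (Fin 56)} : σ ∈ blk i ↔ ∃ g, pp i g = σ := by
  simp [blk]

theorem blk_card (i : Fin 7) : (blk i).card = 56 := by
  rw [blk, Finset.card_map, Finset.card_univ, card_GG, Fintype.card_fin]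

theorem blk_disj (i j : Fin 7) (hij : i ≠ j) : Disjoint (blk i) (blk j) := by
  rw [Finset.disjoint_left]
  intro σ h1 h2
  obtain ⟨g, rfl⟩ := mem_blk.1 h1
  obtain ⟨h, hh⟩ := mem_blk.1 h2
  have := dist_diff hij g h
  rw [hh] at this
  simp [permHammingDist] at this


/-- There exists a `(56,7)`-separable permutation code of length `56` and minimum
distance `55`: a disjoint union of `7` blocks of `56` permutations each (so `392`
codewords), with within-block Hamming distance `56` and cross-block Hamming
distance `55`; in particular there exist `7` mutually orthogonal Latin squares
of order `56`. -/
theorem separable_PA_56_7_and_7MOLS_56 :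
    (∃ L : Fin 7 → Finset (Equiv.Perm (Fin 56)),
      (∀ i, (L i).card = 56) ∧
      (∀ i j, i ≠ j → Disjoint (L i) (L j)) ∧
      (Finset.univ.biUnion L).card = 392 ∧
      (∀ i, ∀ σ ∈ L i, ∀ τ ∈ L i, σ ≠ τ → permHammingDist σ τ = 56) ∧
      (∀ i j, i ≠ j → ∀ σ ∈ L i, ∀ τ ∈ L j, permHammingDist σ τ = 55)) ∧
    (∃ M : Fin 7 → (Fin 56 → Fin 56 → Fin 56),
      (∀ k, IsLatinSquare (M k)) ∧
      (∀ k k', k ≠ k' → IsOrthogonal (M k) (M k'))) := by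


  refine ⟨⟨blk, blk_card, blk_disj, ?_, ?_, ?_⟩,
    ⟨fun k g x => ee (dm k x + ee.symm g), ?_, ?_⟩⟩
  · rw [Finset.card_biUnion (fun i _ j _ hij => blk_disj i j hij)]
    simp [blk_card]
  · intro i σ hσ τ hτ hne
    obtain ⟨g, rfl⟩ := mem_blk.1 hσ
    obtain ⟨h, rfl⟩ := mem_blk.1 hτ
    exact dist_same i fun hgh => hne (by rw [hgh])
  · intro i j hij σ hσ τ hτ
    obtain ⟨g, rfl⟩ := mem_blk.1 hσ
    obtain ⟨h, rfl⟩ := mem_blk.1 hτ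
    exact dist_diff hij g h
  · intro k
    refine ⟨fun g => (pp k (ee.symm g)).bijective, fun x => ?_⟩
    exact (ee.symm.trans ((Equiv.addLeft (dm k x)).trans ee)).bijective
  · rintro k k' hk ⟨g, x⟩ ⟨h, y⟩ hxy
    simp only [Prod.mk.injEq, EmbeddingLike.apply_eq_iff_eq] at hxy
    obtain ⟨h1, h2⟩ := hxy
    have hx : x = y := by
      apply (dm_diff_bij hk).1
      have := congrArg₂ (· - ·) h1 h2
      simpa only [add_sub_add_right_eq_sub] using this
    subst hx
    have := add_left_cancel h1
    rw [ee.symm.injective this]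
end
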